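/- Let K ⊂ ℝ^{n+1} be a smooth, strictly convex body with the origin in its interior, with support function h, Gauss curvature 𝒦, inverse Gauss map X = Dh, and cone-volume-type measure dV = h σ_n dμ where σ_n = 1/𝒦 and μ is the spherical Lebesgue measure on S^n. Then n ∫_{S^n} X dV = ∫_{S^n} h ∇̄ log(h^{n+2}/𝒦) dV, as an identity of vectors in ℝ^{n+1}. -/

import Mathlib

open MeasureTheory Matrix Metric
open scoped RealInnerProductSpace

noncomputable section

/-- Euclidean space `ℝ^{n+1}`. -/
abbrev Euc (n : ℕ) : Type := EuclideanSpace ℝ (Fin (n + 1))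

/-- The Euclidean Hessian matrix of `H : ℝ^{n+1} → ℝ` at `x`. -/
def ehess (n : ℕ) (H : Euc n → ℝ) (x : Euc n) : Matrix (Fin (n + 1)) (Fin (n + 1)) ℝ :=
  Matrix.of fun i j =>
    fderiv ℝ (fun y => fderiv ℝ H y (EuclideanSpace.single j 1)) x (EuclideanSpace.single i 1)

/-- For the 1-homogeneous extension `H` of the support function `h` and `x ∈ S^n`, the matrix
`D²H(x) + h(x)·x xᵀ`.  Its restriction to the tangent space `x^⊥ = T_x S^n` is
`A[h] = ∇̄²h + h ḡ`, and `x` is an eigenvector with eigenvalue `h(x)`. -/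
def bmat (n : ℕ) (H : Euc n → ℝ) (x : Euc n) : Matrix (Fin (n + 1)) (Fin (n + 1)) ℝ :=
  ehess n H x + Matrix.of fun i j => H x * (x i * x j)

/-- `σ_n = det A[h] = det(∇̄²h + h ḡ)/det ḡ`, computed as `det(bmat)/h`. -/
def sigman (n : ℕ) (H : Euc n → ℝ) (x : Euc n) : ℝ :=
  Matrix.det (bmat n H x) / H x

/-- The Gauss curvature `𝒦 = 1/σ_n`. -/
def gaussCurv (n : ℕ) (H : Euc n → ℝ) (x : Euc n) : ℝ := (sigman n H x)⁻¹

/-- The round (spherical) gradient `∇̄f` at `x ∈ S^n`: the Euclidean gradient of the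
0-homogeneous extension `y ↦ f(y/‖y‖)`.  It depends only on `f|_{S^n}` and lies in `T_x S^n`. -/
def sphGrad (n : ℕ) (f : Euc n → ℝ) (x : Euc n) : Euc n :=
  gradient (fun y => f (‖y‖⁻¹ • y)) x

/-- The function `log (h^{n+2}/𝒦)` (as a function of `y`; on the sphere it agrees with the
centro-affine expression appearing in the paper). -/
def logQ (n : ℕ) (H : Euc n → ℝ) (y : Euc n) : ℝ :=
  Real.log ((H y) ^ (n + 2) / gaussCurv n H y)

/-- The centro-affine inner product `g(∇f, ∇u) = h ⟨A[h]⁻¹ ∇̄f, ∇̄u⟩` of the `g`-gradients of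
`f` and `u`, where `g = A[h]/h` is the centro-affine metric. -/
def gInner (n : ℕ) (H f u : Euc n → ℝ) (x : Euc n) : ℝ :=
  H x * ∑ i, (bmat n H x)⁻¹.mulVec (fun j => sphGrad n f x j) i * sphGrad n u x i

/-- The squared centro-affine norm `|∇f|_g²` of the `g`-gradient of `f`. -/
def gNormSq (n : ℕ) (H f : Euc n → ℝ) (x : Euc n) : ℝ := gInner n H f f x

/-- The centro-affine Laplacian `Δf = div_g(∇ f)` (with respect to the centro-affine connection
`∇` induced by the centro-affine normal `ξ = X`, and the centro-affine metric `g = A[h]/h`),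
computed via the identity `Δf = tr_g(A[hf]/h) - n f`, i.e.
`Δf = tr(B[h]⁻¹ B[hf]) - (n+1) f` where `B[u] = D²ũ + u·x xᵀ` for the 1-homogeneous
extension `ũ` of `u`. -/
def caLap (n : ℕ) (H f : Euc n → ℝ) (x : Euc n) : ℝ :=
  Matrix.trace ((bmat n H x)⁻¹ * bmat n (fun y => H y * f (‖y‖⁻¹ • y)) x) - (n + 1) * f x

/-- The spherical Lebesgue measure on `S^n ⊂ ℝ^{n+1}` (up to a positive constant). -/
def sphMeasure (n : ℕ) : Measure (sphere (0 : Euc n) 1) :=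
  (volume : Measure (Euc n)).toSphere

/-- The density of the cone-volume-type measure `dV = h σ_n dμ` with respect to the spherical
Lebesgue measure. -/
def volDens (n : ℕ) (H : Euc n → ℝ) (x : Euc n) : ℝ := H x * sigman n H x

lemma norm_fd (n : ℕ) (y : Euc n) (hy : y ≠ 0) :
    HasFDerivAt (fun y : Euc n => ‖y‖) (‖y‖⁻¹ • innerSL ℝ y) y := by
  have h := (hasStrictFDerivAt_norm_sq y).hasFDerivAt.sqrt (by simpa using hy)
  simp only [Real.sqrt_sq (norm_nonneg _)] at h
  have h0 : ‖y‖ ≠ 0 := by simpa using hy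
  have key : (‖y‖⁻¹ • innerSL ℝ y : Euc n →L[ℝ] ℝ) = (1 / (2 * ‖y‖)) • 2 • innerSL ℝ y := by
    rw [← Nat.cast_smul_eq_nsmul ℝ, smul_smul]
    congr 1
    push_cast
    field_simp
  rw [key]
  exact h

lemma polar_aux (n : ℕ) (a : ℝ → ℝ) (b : Euc n → ℝ) :
    ∫ y : Euc n, a ‖y‖ * b (‖y‖⁻¹ • y)
      = (∫ x : sphere (0 : Euc n) 1, b x ∂(sphMeasure n)) * ∫ r in Set.Ioi (0:ℝ), r ^ n * a r := by
  have hd : Module.finrank ℝ (Euc n) - 1 = n := by simp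
  calc
    _ = ∫ y : ({(0 : Euc n)}ᶜ : Set (Euc n)), a ‖y.1‖ * b (‖y.1‖⁻¹ • y.1)
          ∂((volume : Measure (Euc n)).comap (↑)) := by
      rw [integral_subtype_comap (measurableSet_singleton _).compl
        fun y : Euc n ↦ a ‖y‖ * b (‖y‖⁻¹ • y),
        restrict_compl_singleton]
    _ = ∫ p, b p.1 * a p.2 ∂((volume : Measure (Euc n)).toSphere.prod
          (.volumeIoiPow (Module.finrank ℝ (Euc n) - 1))) := by
      have := (volume : Measure (Euc n)).measurePreserving_homeomorphUnitSphereProd.integral_comp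
        (Homeomorph.measurableEmbedding _)
        (fun p : sphere (0 : Euc n) 1 × Set.Ioi (0:ℝ) => b p.1 * a p.2)
      rw [← this]
      simp [mul_comm]
    _ = _ := by
      rw [hd, integral_prod_mul (fun x : sphere (0 : Euc n) 1 => b x)
        (fun r : Set.Ioi (0:ℝ) => a r)]
      congr 1
      simp only [Measure.volumeIoiPow, ENNReal.ofReal]
      rw [integral_withDensity_eq_integral_smul,
        integral_subtype_comap measurableSet_Ioi fun r ↦ Real.toNNReal (r ^ n) • a r,
        setIntegral_congr_fun measurableSet_Ioi fun x hx ↦ ?_]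
      · simp only [NNReal.smul_def, Real.coe_toNNReal _ (pow_nonneg (Set.mem_Ioi.1 hx).le _), smul_eq_mul]
      · exact (measurable_subtype_coe.pow_const _).real_toNNReal

lemma sph_div (n : ℕ) (hn : n ≠ 0) (F : Euc n → ℝ) (hF : ContDiffOn ℝ 1 F {(0 : Euc n)}ᶜ)
    (hom : ∀ c : ℝ, 0 < c → ∀ x, F (c • x) = F x) (v : Euc n) :
    ∫ x : sphere (0 : Euc n) 1, fderiv ℝ F x v ∂(sphMeasure n)
      = n * ∫ x : sphere (0 : Euc n) 1, ⟪(x : Euc n), v⟫ * F x ∂(sphMeasure n) := by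
  let φ : ContDiffBump (2:ℝ) := ⟨1/2, 1, by norm_num, by norm_num⟩
  have hφc : ContDiff ℝ 1 φ := φ.contDiff
  have hφsupp : ∀ r, φ r ≠ 0 → 1 < r ∧ r < 3 := by
    intro r hr
    have : r ∈ Function.support φ := hr
    rw [φ.support_eq, Real.ball_eq_Ioo] at this
    constructor <;> [have := this.1; have := this.2] <;> simp [φ] at this <;> linarith
  have hφ0 : ∀ r ≤ 1, φ r = 0 := fun r hr => by
    by_contra h
    linarith [(hφsupp r h).1]
  have h0 : IsOpen ({(0 : Euc n)}ᶜ : Set (Euc n)) := isOpen_compl_singleton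
  let Φ : Euc n → ℝ := fun y => φ ‖y‖
  have hts : tsupport Φ ⊆ {y | 1 ≤ ‖y‖ ∧ ‖y‖ ≤ 3} := by
    apply closure_minimal
    · intro y hy
      exact ⟨(hφsupp _ hy).1.le, (hφsupp _ hy).2.le⟩
    · exact (isClosed_le continuous_const continuous_norm).inter
        (isClosed_le continuous_norm continuous_const)
  have hts0 : tsupport Φ ⊆ {(0 : Euc n)}ᶜ := by
    intro y hy h
    have := (hts hy).1
    simp only [Set.mem_singleton_iff] at h
    rw [h, norm_zero] at this
    linarith
  have hcs : HasCompactSupport Φ :=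
    (isCompact_closedBall (0 : Euc n) 3).of_isClosed_subset (isClosed_tsupport _)
      (fun y hy => by simpa using (hts hy).2)
  have hΦd : ∀ y ≠ 0, HasFDerivAt Φ ((deriv φ ‖y‖ * ‖y‖⁻¹) • innerSL ℝ y) y := by
    intro y hy
    have h1 : HasDerivAt φ (deriv φ ‖y‖) ‖y‖ := (hφc.differentiable (by norm_num) _).hasDerivAt
    have h2 := norm_fd n y hy
    have := h1.comp_hasFDerivAt y h2
    rwa [smul_smul] at this
  have hΦ : ContDiff ℝ 1 Φ := by
    rw [contDiff_iff_contDiffAt]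
    intro y
    by_cases hy : y = 0
    · have : Φ =ᶠ[nhds y] fun _ => 0 := by
        filter_upwards [Metric.ball_mem_nhds y one_pos] with z hz
        apply hφ0
        rw [hy] at hz
        simpa using (mem_ball_zero_iff.1 hz).le
      exact contDiffAt_const.congr_of_eventuallyEq this
    · exact hφc.contDiffAt.comp y (contDiffAt_norm ℝ hy)
  have hFd : ∀ y ≠ 0, DifferentiableAt ℝ F y := fun y hy =>
    (hF.contDiffAt (h0.mem_nhds hy)).differentiableAt (by norm_num)
  have hint : ∀ (A B : Euc n → ℝ), Continuous A → tsupport A ⊆ tsupport Φ →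
      ContinuousOn B {(0 : Euc n)}ᶜ → Integrable (fun y => A y * B y) := by
    intro A B hA hs hB
    have hAc : HasCompactSupport A := hcs.isCompact.of_isClosed_subset (isClosed_tsupport _) hs
    apply Continuous.integrable_of_hasCompactSupport
    · exact (hA.continuousOn.mul hB).continuous_of_tsupport_subset h0
        ((tsupport_mul_subset_left).trans (hs.trans hts0))
    · exact hAc.mul_right
  have hFv : ContinuousOn (fun y => fderiv ℝ F y v) {(0 : Euc n)}ᶜ :=
    (hF.continuousOn_fderiv_of_isOpen h0 le_rfl).clm_apply continuousOn_const
  have hΦv : Continuous (fun y => fderiv ℝ Φ y v) :=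
    (hΦ.continuous_fderiv (by norm_num)).clm_apply continuous_const
  have hparts := integral_mul_fderiv_eq_neg_fderiv_mul_of_integrable (μ := (volume : Measure (Euc n)))
    (f := Φ) (g := F) (v := v)
    (hint _ _ hΦv (tsupport_fderiv_apply_subset ℝ v) hF.continuousOn)
    (hint _ _ hΦ.continuous subset_rfl hFv)
    (hint _ _ hΦ.continuous subset_rfl hF.continuousOn)
    (fun y _ => hΦ.differentiable (by norm_num) y)
    (fun y hy => hFd y (hts0 hy))
  have hne : ∀ᵐ y : Euc n, y ≠ 0 := by
    exact compl_mem_ae_iff.2 (measure_singleton (μ := (volume : Measure (Euc n))) 0)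
  have e1 : ∫ y, Φ y * fderiv ℝ F y v
      = ∫ y : Euc n, (fun r => φ r * r⁻¹) ‖y‖ * (fun u => fderiv ℝ F u v) (‖y‖⁻¹ • y) := by
    apply integral_congr_ae
    filter_upwards [hne] with y hy
    have hp : 0 < ‖y‖⁻¹ := by positivity
    have h1 := fderiv_comp_smul (𝕜 := ℝ) (f := F) (x := y) (‖y‖⁻¹)
    have h2 : (fun x => F (‖y‖⁻¹ • x)) = F := funext fun x => hom _ hp x
    rw [h2] at h1
    rw [h1]
    simp [Φ, mul_assoc]
  have e2 : ∫ y, fderiv ℝ Φ y v * F y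
      = ∫ y : Euc n, (deriv φ) ‖y‖ * (fun u => ⟪u, v⟫ * F u) (‖y‖⁻¹ • y) := by
    apply integral_congr_ae
    filter_upwards [hne] with y hy
    have hp : 0 < ‖y‖⁻¹ := by positivity
    simp only [(hΦd y hy).fderiv, hom _ hp, real_inner_smul_left]
    simp
    ring
  rw [e1, e2, polar_aux n (fun r => φ r * r⁻¹) (fun u => fderiv ℝ F u v),
    polar_aux n (deriv φ) (fun u => ⟪u, v⟫ * F u)] at hparts
  have hu : ∀ r, HasDerivAt (fun r => r ^ n * φ r) (n * r ^ (n-1) * φ r + r ^ n * deriv φ r) r :=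
    fun r => (hasDerivAt_pow n r).mul (hφc.differentiable (by norm_num) _).hasDerivAt
  have hdc : Continuous (deriv φ) := hφc.continuous_deriv (by norm_num)
  have i1 : Integrable (fun r : ℝ => n * r ^ (n-1) * φ r) :=
    Continuous.integrable_of_hasCompactSupport (by fun_prop) φ.hasCompactSupport.mul_left
  have i2 : Integrable (fun r : ℝ => r ^ n * deriv φ r) :=
    Continuous.integrable_of_hasCompactSupport (by fun_prop) φ.hasCompactSupport.deriv.mul_left
  have i3 : Integrable (fun r : ℝ => r ^ n * φ r) :=
    Continuous.integrable_of_hasCompactSupport (by fun_prop) φ.hasCompactSupport.mul_left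
  have hz := integral_eq_zero_of_hasDerivAt_of_integrable hu (i1.add i2) i3
  rw [integral_add i1 i2] at hz
  have hd0 : ∀ r ≤ 0, deriv φ r = 0 := by
    intro r hr
    have : (φ : ℝ → ℝ) =ᶠ[nhds r] fun _ => 0 := by
      filter_upwards [Iio_mem_nhds (show r < 1 by linarith)] with s hs
      exact hφ0 s (Set.mem_Iio.1 hs).le
    rw [this.deriv_eq]; simp
  have j2 : ∫ r in Set.Ioi (0:ℝ), r ^ n * deriv φ r = ∫ r, r ^ n * deriv φ r := by
    apply setIntegral_eq_integral_of_forall_compl_eq_zero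
    intro r hr
    simp [hd0 r (by simpa using hr)]
  have j1 : n * ∫ r in Set.Ioi (0:ℝ), r ^ n * (φ r * r⁻¹) = ∫ r, n * r ^ (n-1) * φ r := by
    rw [setIntegral_eq_integral_of_forall_compl_eq_zero, ← integral_const_mul]
    · congr 1
      ext r
      by_cases hr : r = 0
      · simp [hr, hφ0]
      · obtain ⟨m, rfl⟩ := Nat.exists_eq_succ_of_ne_zero hn
        simp [pow_succ]
        field_simp
    · intro r hr
      have : r ≤ 0 := by simpa using hr
      simp [hφ0 r (by linarith)]
  have hpos : 0 < ∫ r in Set.Ioi (0:ℝ), r ^ n * (φ r * r⁻¹) := by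
    have : 0 < ∫ r, n * r ^ (n-1) * φ r := by
      have hnn : 0 ≤ fun r : ℝ => n * r ^ (n-1) * φ r := by
        intro r
        by_cases h : φ r = 0
        · simp [h]
        · have := (hφsupp r h).1
          have := φ.nonneg (x := r)
          positivity
      apply integral_pos_of_integrable_nonneg_nonzero (x := 2) (by fun_prop) i1 hnn
      rw [φ.one_of_mem_closedBall (by simp [φ])]
      positivity
    rw [← j1] at this
    exact pos_of_mul_pos_right this (by positivity)
  set I := ∫ r in Set.Ioi (0:ℝ), r ^ n * (φ r * r⁻¹)
  rw [j2] at hparts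
  rw [← j1] at hz
  have : (∫ r, r ^ n * deriv φ r) = -(n * I) := by linarith
  rw [this] at hparts
  apply mul_right_cancel₀ hpos.ne'
  linarith

lemma cont_gradient (n : ℕ) (F : Euc n → ℝ) (hF : ContDiffOn ℝ 1 F {(0 : Euc n)}ᶜ) :
    Continuous fun x : sphere (0 : Euc n) 1 => gradient F x := by
  have h0 : IsOpen ({(0 : Euc n)}ᶜ : Set (Euc n)) := isOpen_compl_singleton
  have h1 := hF.continuousOn_fderiv_of_isOpen h0 le_rfl
  have h2 : ContinuousOn (gradient F) {(0 : Euc n)}ᶜ :=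
    (InnerProductSpace.toDual ℝ (Euc n)).symm.continuous.comp_continuousOn h1
  exact h2.comp_continuous continuous_subtype_val
    (fun x => ne_zero_of_mem_unit_sphere x)

lemma cont_sph (n : ℕ) (F : Euc n → ℝ) (hF : ContDiffOn ℝ 1 F {(0 : Euc n)}ᶜ) :
    Continuous fun x : sphere (0 : Euc n) 1 => F x :=
  hF.continuousOn.comp_continuous continuous_subtype_val
    (fun x => ne_zero_of_mem_unit_sphere x)

lemma integrable_sph (n : ℕ) {E : Type*} [NormedAddCommGroup E]
    (f : sphere (0 : Euc n) 1 → E) (hf : Continuous f) : Integrable f (sphMeasure n) := by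
  have : IsFiniteMeasure (sphMeasure n) := by unfold sphMeasure; infer_instance
  exact hf.integrable_of_hasCompactSupport (HasCompactSupport.of_compactSpace f)

lemma sph_div_vec (n : ℕ) (hn : n ≠ 0) (F : Euc n → ℝ) (hF : ContDiffOn ℝ 1 F {(0 : Euc n)}ᶜ)
    (hom : ∀ c : ℝ, 0 < c → ∀ x, F (c • x) = F x) :
    ∫ x : sphere (0 : Euc n) 1, (gradient F x - (n * F x) • (x : Euc n)) ∂(sphMeasure n) = 0 := by
  have c1 := cont_gradient n F hF
  have c2 := cont_sph n F hF
  have cW : Continuous fun x : sphere (0 : Euc n) 1 => gradient F x - (n * F x) • (x : Euc n) :=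
    c1.sub ((continuous_const.mul c2).smul continuous_subtype_val)
  apply ext_inner_left ℝ
  intro v
  rw [← integral_inner (integrable_sph n _ cW), inner_zero_right]
  have : ∀ x : sphere (0 : Euc n) 1, ⟪v, gradient F x - (n * F x) • (x : Euc n)⟫
      = fderiv ℝ F x v - n * (⟪(x : Euc n), v⟫ * F x) := by
    intro x
    rw [inner_sub_right, real_inner_comm, inner_gradient_left, real_inner_smul_right,
      real_inner_comm v]
    ring
  simp only [this]
  have c3 : Continuous fun x : sphere (0 : Euc n) 1 => fderiv ℝ F x v := by
    simp only [← inner_gradient_left]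
    fun_prop
  have c4 : Continuous fun x : sphere (0 : Euc n) 1 => n * (⟪(x : Euc n), v⟫ * F x) :=
    continuous_const.mul ((continuous_subtype_val.inner continuous_const).mul c2)
  rw [integral_sub (integrable_sph n _ c3) (integrable_sph n _ c4),
    integral_const_mul, sph_div n hn F hF hom v, sub_self]

lemma cd_bmat (n : ℕ) (H : Euc n → ℝ) (hs : ContDiffOn ℝ (⊤ : ℕ∞) H {(0 : Euc n)}ᶜ) :
    ContDiffOn ℝ 1 (fun x => (bmat n H x).det) {(0 : Euc n)}ᶜ := by
  intro x hx
  apply ContDiffAt.contDiffWithinAt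
  have h : ContDiffAt ℝ (⊤ : ℕ∞) H x := hs.contDiffAt (isOpen_compl_singleton.mem_nhds hx)
  have h1 : ContDiffAt ℝ 1 H x := h.of_le (by exact_mod_cast le_top)
  have he : ∀ i j, ContDiffAt ℝ 1 (fun x => bmat n H x i j) x := by
    intro i j
    have a1 : ContDiffAt ℝ 2 (fun y => fderiv ℝ H y (EuclideanSpace.single j 1)) x :=
      (h.fderiv_right (m := 2) (by
        have : ((3 : ℕ∞) : WithTop ℕ∞) ≤ ((⊤ : ℕ∞) : WithTop ℕ∞) := WithTop.coe_le_coe.2 le_top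
        exact (by norm_num : (2 + 1 : WithTop ℕ∞) = 3).le.trans this)).clm_apply contDiffAt_const
    have a2 : ContDiffAt ℝ 1 (fun x => fderiv ℝ (fun y => fderiv ℝ H y (EuclideanSpace.single j 1)) x
        (EuclideanSpace.single i 1)) x :=
      (a1.fderiv_right (m := 1) (by norm_num)).clm_apply contDiffAt_const
    have a3 : ∀ k, ContDiffAt ℝ 1 (fun x : Euc n => x k) x := fun k => by fun_prop
    simp only [bmat, ehess, Matrix.add_apply, Matrix.of_apply]
    exact a2.add (h1.mul ((a3 i).mul (a3 j)))
  simp only [Matrix.det_apply']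
  apply ContDiffAt.sum
  intro σ _
  exact contDiffAt_const.mul (contDiffAt_prod fun i _ => he _ _)

lemma cd_unit (n : ℕ) (G : Euc n → ℝ) (hG : ContDiffOn ℝ 1 G {(0 : Euc n)}ᶜ) :
    ContDiffOn ℝ 1 (fun y => G (‖y‖⁻¹ • y)) {(0 : Euc n)}ᶜ := by
  apply hG.comp
  · intro y hy
    apply ContDiffAt.contDiffWithinAt
    exact ((contDiffAt_norm ℝ hy).inv (by simpa using hy)).smul contDiffAt_id
  · intro y hy
    have : y ≠ 0 := hy
    simpa using this

lemma hom_unit (n : ℕ) (c : ℝ) (hc : 0 < c) (x : Euc n) :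
    ‖c • x‖⁻¹ • (c • x) = ‖x‖⁻¹ • x := by
  rw [norm_smul, smul_smul, Real.norm_of_nonneg hc.le]
  congr 1
  field_simp

/-- For a smooth, strictly convex body `K ⊂ ℝ^{n+1}` with the origin in its
interior, with `dV = h σ_n dμ`, one has `n ∫ X dV = ∫ h ∇̄ log(h^{n+2}/𝒦) dV` as vectors in
`ℝ^{n+1}`. -/
theorem centro_affine_main_identity_integrated
    (n : ℕ) (hn : 2 ≤ n)
    (H : Euc n → ℝ) (K : Set (Euc n))
    (hK : K = {y : Euc n | ∀ x : Euc n, ⟪x, y⟫ ≤ H x})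
    (hhomog : ∀ c : ℝ, 0 < c → ∀ x : Euc n, H (c • x) = c * H x)
    (hconv : ConvexOn ℝ Set.univ H)
    (hsmooth : ContDiffOn ℝ (⊤ : ℕ∞) H {(0 : Euc n)}ᶜ)
    (hpos : ∀ x ∈ sphere (0 : Euc n) 1, 0 < H x)
    (hposdef : ∀ x ∈ sphere (0 : Euc n) 1, (bmat n H x).PosDef) :
    (n : ℝ) • (∫ x : sphere (0 : Euc n) 1,
        volDens n H x • gradient H x ∂(sphMeasure n))
      = ∫ x : sphere (0 : Euc n) 1,
          volDens n H x • (H x • sphGrad n (logQ n H) x) ∂(sphMeasure n) := by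
  have hH1 : ContDiffOn ℝ 1 H {(0 : Euc n)}ᶜ := hsmooth.of_le (by exact_mod_cast le_top)
  have hD1 := cd_bmat n H hsmooth
  let h0 : Euc n → ℝ := fun y => H (‖y‖⁻¹ • y)
  let d0 : Euc n → ℝ := fun y => (bmat n H (‖y‖⁻¹ • y)).det
  have hh0 : ContDiffOn ℝ 1 h0 {(0 : Euc n)}ᶜ := cd_unit n H hH1
  have hd0 : ContDiffOn ℝ 1 d0 {(0 : Euc n)}ᶜ := cd_unit n _ hD1
  let F : Euc n → ℝ := fun y => h0 y * d0 y
  have hF : ContDiffOn ℝ 1 F {(0 : Euc n)}ᶜ := hh0.mul hd0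
  have hom : ∀ c : ℝ, 0 < c → ∀ x, F (c • x) = F x := by
    intro c hc x
    simp only [F, h0, d0, hom_unit n c hc x]
  have hdiv := sph_div_vec n (by omega) F hF hom
  have cG := cont_gradient n F hF
  have cF := cont_sph n F hF
  have cGH := cont_gradient n H hH1
  have cD := cont_sph n _ hD1
  have hvol : ∀ x : sphere (0 : Euc n) 1, volDens n H x = (bmat n H x).det := by
    intro x
    have := (hpos x x.2).ne'
    simp only [volDens, sigman]
    field_simp
  have key : ∀ x : sphere (0 : Euc n) 1,
      volDens n H x • (H x • sphGrad n (logQ n H) x)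
      = (n : ℝ) • (bmat n H x).det • gradient H x
        + (gradient F x - (n * F x) • (x : Euc n)) := by
    intro x
    have hx1 : ‖(x : Euc n)‖ = 1 := by simp
    have hx0 : (x : Euc n) ≠ 0 := ne_zero_of_mem_unit_sphere x
    have hnh : {(0 : Euc n)}ᶜ ∈ nhds (x : Euc n) := isOpen_compl_singleton.mem_nhds hx0
    have hu : ∀ y : Euc n, y ≠ 0 → ‖y‖⁻¹ • y ∈ sphere (0 : Euc n) 1 := by
      intro y hy
      have : ‖y‖ ≠ 0 := by simpa using hy
      simp [norm_smul, this]
    have vh : h0 x = H x := by simp [h0, hx1]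
    have vd : d0 x = (bmat n H x).det := by simp [d0, hx1]
    have ph := hpos x x.2
    have pd := (hposdef x x.2).det_pos
    have dh : HasFDerivAt h0 (fderiv ℝ h0 x) x :=
      ((hh0.contDiffAt hnh).differentiableAt (by norm_num)).hasFDerivAt
    have dd : HasFDerivAt d0 (fderiv ℝ d0 x) x :=
      ((hd0.contDiffAt hnh).differentiableAt (by norm_num)).hasFDerivAt
    have eH : fderiv ℝ H x = (1:ℝ) • fderiv ℝ h0 x + H x • innerSL ℝ (x : Euc n) := by
      have e : H =ᶠ[nhds (x : Euc n)] fun y => ‖y‖ * h0 y := by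
        filter_upwards [hnh] with y hy
        have : 0 < ‖y‖ := norm_pos_iff.2 hy
        simp only [h0]
        rw [hhomog _ (inv_pos.2 this)]
        field_simp
      have := (norm_fd n x hx0).mul dh
      rw [e.fderiv_eq]
      refine this.fderiv.trans ?_
      simp [hx1, vh]
    have eL : fderiv ℝ (fun y : Euc n => logQ n H (‖y‖⁻¹ • y)) x
        = ((n : ℝ) + 1) • ((H x)⁻¹ • fderiv ℝ h0 x) + ((bmat n H x).det)⁻¹ • fderiv ℝ d0 x := by
      have e : (fun y : Euc n => logQ n H (‖y‖⁻¹ • y)) =ᶠ[nhds (x : Euc n)]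
          fun y => ((n : ℝ) + 1) * Real.log (h0 y) + Real.log (d0 y) := by
        filter_upwards [hnh] with y hy
        have p1 : 0 < h0 y := hpos _ (hu y hy)
        have p2 : 0 < d0 y := (hposdef _ (hu y hy)).det_pos
        have : logQ n H (‖y‖⁻¹ • y) = Real.log ((h0 y) ^ (n + 2) / (d0 y / h0 y)⁻¹) := rfl
        rw [this]
        have : (h0 y) ^ (n + 2) / (d0 y / h0 y)⁻¹ = (h0 y) ^ (n + 1) * d0 y := by
          field_simp
          ring
        rw [this, Real.log_mul (by positivity) p2.ne', Real.log_pow]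
        push_cast
        ring
      have := ((dh.log (by rw [vh]; exact ph.ne')).const_mul ((n : ℝ) + 1)).add
        (dd.log (by rw [vd]; exact pd.ne'))
      rw [e.fderiv_eq]
      rw [vh, vd] at this
      exact this.fderiv
    have eF : fderiv ℝ F x = H x • fderiv ℝ d0 x + (bmat n H x).det • fderiv ℝ h0 x := by
      have := (dh.mul dd).fderiv
      rw [vh, vd] at this
      exact this
    apply ext_inner_right ℝ
    intro v
    rw [hvol]
    simp only [inner_add_left, inner_sub_left, real_inner_smul_left, sphGrad, inner_gradient_left,
      eH, eL, eF]
    have vF : F x = H x * (bmat n H x).det := by simp only [F, vh, vd]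
    rw [vF]
    simp
    field_simp
    ring
  simp only [key]
  simp only [hvol]
  have cI : Continuous fun x : sphere (0 : Euc n) 1 => (bmat n H x).det • gradient H x :=
    cD.smul cGH
  have cW : Continuous fun x : sphere (0 : Euc n) 1 => gradient F x - (n * F x) • (x : Euc n) :=
    cG.sub ((continuous_const.mul cF).smul continuous_subtype_val)
  have cJ : Continuous fun x : sphere (0 : Euc n) 1 =>
      (n : ℝ) • (bmat n H x).det • gradient H x := cI.const_smul (n : ℝ)
  rw [integral_add (integrable_sph n _ cJ) (integrable_sph n _
    cW), hdiv,
    add_zero, integral_smul]
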